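/- arXiv:math/0503568 — 2 statements merged into one kernel-verified Lean document; each statement's English description precedes it below -/
import Mathlib

section
/- The operator T = S + Ŝ satisfies the recurrent identity T⁵ = −2(b²+m²)·T³ − (b²−m²)²·T, where b² = |X|²|Y|² − ⟨X,Y⟩² and m² = ⟨X,J₁Y⟩² + ⟨X,J₂Y⟩² + ⟨X,J₃Y⟩². -/
open scoped RealInnerProductSpace

/-!
Regard `V` as a quaternionic vector space with the Hermitian form
`h(A, Z) = ⟨A, Z⟩ + ∑ᵢ ⟨Jᵢ A, Z⟩ Jᵢ`. Then `T Z = h(Y, Z) X - h(X, Z) Y`, so `T` is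
quaternion-linear of rank at most two. Let `M = ∑ᵢ ⟨X, Jᵢ Y⟩ Jᵢ` be the imaginary part of
`h(Y, X)`, so that `M² = -m²` and `M` commutes with `T`. On `X` and `Y`, the operator `T - M` acts
as `S`, whose square there is `-b²`. Hence `X` and `Y` are killed by
`((T + M)² + b²)((T - M)² + b²)`, which expands to the real polynomial
`T⁴ + 2(b² + m²)T² + (b² - m²)²`. Being quaternion-linear, it also kills every `Jᵢ X` and `Jᵢ Y`,
hence the range of `T`.
-/

section Wedge

variable {R V : Type*} [CommRing R] [AddCommGroup V] [Module R V]
variable {B : LinearMap.BilinForm R V} {J : Module.End R V}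

/-- The operator `Z ↦ B(C, Z) A - B(A, Z) C`, the infinitesimal rotation in the plane spanned by
`A` and `C`; this is `S_{AC}` when `B` is the inner product. -/
def wedge (B : LinearMap.BilinForm R V) (A C : V) : Module.End R V :=
  (B C).smulRight A - (B A).smulRight C

/-- The Gram determinant of two vectors; this is `b²` when `B` is the inner product. -/
def gramDet (B : LinearMap.BilinForm R V) (X Y : V) : R :=
  B X X * B Y Y - B X Y ^ 2

lemma wedge_apply (A C Z : V) : wedge B A C Z = B C Z • A - B A Z • C := rfl

lemma wedge_neg_left (A C : V) : wedge B (-A) C = -wedge B A C := by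
  ext Z
  simp only [wedge_apply, LinearMap.neg_apply, map_neg]
  module

lemma wedge_neg_right (A C : V) : wedge B A (-C) = -wedge B A C := by
  ext Z
  simp only [wedge_apply, LinearMap.neg_apply, map_neg]
  module

lemma wedge_wedge_left (hB : B.IsSymm) (X Y : V) :
    wedge B X Y (wedge B X Y X) = -gramDet B X Y • X := by
  simp only [wedge_apply, map_sub, map_smul, hB.eq Y X, gramDet]
  module

lemma wedge_wedge_right (hB : B.IsSymm) (X Y : V) :
    wedge B X Y (wedge B X Y Y) = -gramDet B X Y • Y := by
  simp only [wedge_apply, map_sub, map_smul, hB.eq Y X, gramDet]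
  module

lemma sq_apply_eq_of_apply_eq_wedge (hB : B.IsSymm) {X Y : V} {D : Module.End R V}
    (hX : D X = wedge B X Y X) (hY : D Y = wedge B X Y Y) :
    (D ^ 2) X = -gramDet B X Y • X ∧ (D ^ 2) Y = -gramDet B X Y • Y := by
  have hD {Z : V} (hZ : D Z = wedge B X Y Z) :
      (D ^ 2) Z = wedge B X Y (wedge B X Y Z) := by
    rw [sq, Module.End.mul_apply, hZ, wedge_apply, map_sub, map_smul, map_smul, hX, hY,
      ← map_smul, ← map_smul, ← map_sub]
  exact ⟨(hD hX).trans (wedge_wedge_left hB X Y), (hD hY).trans (wedge_wedge_right hB X Y)⟩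

lemma skewAdjoint_apply_left (hJ : B.IsSkewAdjoint J) (A C : V) : B (J A) C = -B A (J C) := by
  simpa using hJ A C

lemma skewAdjoint_apply_self [Invertible (2 : R)] (hB : B.IsSymm) (hJ : B.IsSkewAdjoint J)
    (A : V) : B A (J A) = 0 := by
  have hneg : B A (J A) = -B A (J A) :=
    (hB.eq A (J A)).trans (skewAdjoint_apply_left hJ A A)
  refine (isUnit_of_invertible (2 : R)).mul_right_eq_zero.mp ?_
  linear_combination hneg

lemma skewAdjoint_mul_wedge (hJ : B.IsSkewAdjoint J) (A C : V) :
    J * wedge B A C = wedge B A C * J + (wedge B (J A) C + wedge B A (J C)) := by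
  ext Z
  simp only [LinearMap.add_apply, Module.End.mul_apply, wedge_apply, map_sub, map_smul,
    skewAdjoint_apply_left hJ]
  module

end Wedge

/-- Factoring over `M` as over a square root of `-m`. -/
lemma quartic_eq_mul_of_commute {R A : Type*} [CommRing R] [Ring A] [Algebra R A] {T M : A}
    (hTM : Commute T M) {m : R} (hM : M ^ 2 = -m • (1 : A)) (b : R) :
    T ^ 4 + (2 * (b + m)) • T ^ 2 + (b - m) ^ 2 • (1 : A) =
      ((T + M) ^ 2 + b • 1) * ((T - M) ^ 2 + b • 1) := by
  have hprod : (T + M) ^ 2 * (T - M) ^ 2 = (T ^ 2 + m • 1) ^ 2 := by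
    have hcomm : Commute (T + M) (T - M) :=
      ((Commute.refl T).add_left hTM.symm).sub_right (hTM.add_left (Commute.refl M))
    rw [← hcomm.mul_pow, ← hTM.sq_sub_sq, hM, neg_smul, sub_neg_eq_add]
  have hsum : (T + M) ^ 2 + (T - M) ^ 2 = 2 • (T ^ 2 - m • 1) := by
    rw [hTM.add_sq, hTM.sub_sq, hM]
    module
  calc
    _ = (T ^ 2 + m • 1) ^ 2 + b • 2 • (T ^ 2 - m • 1) + b ^ 2 • (1 : A) := by
      simp only [sq, add_mul, mul_add, smul_mul_assoc, mul_smul_comm, one_mul, mul_one]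
      rw [show T ^ 4 = T * T * (T * T) by noncomm_ring]
      module
    _ = (T + M) ^ 2 * (T - M) ^ 2 + b • ((T + M) ^ 2 + (T - M) ^ 2) + b ^ 2 • (1 : A) := by
      rw [hprod, hsum]
    _ = _ := by
      simp only [add_mul, mul_add, smul_mul_assoc, mul_smul_comm, one_mul, mul_one]
      module

lemma commute_quartic {R A : Type*} [CommRing R] [Ring A] [Algebra R A] {T J : A}
    (hTJ : Commute T J) (c d : R) : Commute (T ^ 4 + c • T ^ 2 + d • 1) J :=
  ((hTJ.pow_left 4).add_left ((hTJ.pow_left 2).smul_left c)).add_left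
    ((Commute.one_left J).smul_left d)

section Quaternionic

variable {R V : Type*} [CommRing R] [AddCommGroup V] [Module R V]
variable {B : LinearMap.BilinForm R V}
variable {q : QuaternionAlgebra.Basis (Module.End R V) (-1 : R) 0 (-1)}

/-- The operator `T = S + Ŝ` of `X` and `Y`, for the quaternionic structure
`(J₁, J₂, J₃) = (q.i, q.j, q.k)`. -/
def quaternionicWedge (B : LinearMap.BilinForm R V)
    (q : QuaternionAlgebra.Basis (Module.End R V) (-1 : R) 0 (-1)) (X Y : V) : Module.End R V :=
  wedge B X Y +
    (wedge B (q.i X) (q.i Y) + wedge B (q.j X) (q.j Y) + wedge B (q.k X) (q.k Y))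

lemma add_eq_quaternionicWedge {X Y : V} {S S₁ S₂ S₃ : Module.End R V}
    (hS : ∀ Z, S Z = B Y Z • X - B X Z • Y)
    (hS₁ : ∀ Z, S₁ Z = B (q.i Y) Z • q.i X - B (q.i X) Z • q.i Y)
    (hS₂ : ∀ Z, S₂ Z = B (q.j Y) Z • q.j X - B (q.j X) Z • q.j Y)
    (hS₃ : ∀ Z, S₃ Z = B (q.k Y) Z • q.k X - B (q.k X) Z • q.k Y) :
    S + (S₁ + S₂ + S₃) = quaternionicWedge B q X Y := by
  ext Z
  simp only [quaternionicWedge, LinearMap.add_apply, wedge_apply, hS, hS₁, hS₂, hS₃]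

/-- The action on `V` of the imaginary quaternion `∑ᵢ B(X, Jᵢ Y) Jᵢ`, the imaginary part of the
quaternionic Hermitian product `h(Y, X)`, where `h(A, Z) = B(A, Z) + ∑ᵢ B(Jᵢ A, Z) Jᵢ`. -/
def imPairing (B : LinearMap.BilinForm R V)
    (q : QuaternionAlgebra.Basis (Module.End R V) (-1 : R) 0 (-1)) (X Y : V) : Module.End R V :=
  B X (q.i Y) • q.i + B X (q.j Y) • q.j + B X (q.k Y) • q.k

/-- The norm of the quaternion acting as `imPairing`; this is `m²` when `B` is the inner product. -/
def imPairingNormSq (B : LinearMap.BilinForm R V)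
    (q : QuaternionAlgebra.Basis (Module.End R V) (-1 : R) 0 (-1)) (X Y : V) : R :=
  B X (q.i Y) ^ 2 + B X (q.j Y) ^ 2 + B X (q.k Y) ^ 2

lemma isSkewAdjoint_k (hi : B.IsSkewAdjoint q.i) (hj : B.IsSkewAdjoint q.j) :
    B.IsSkewAdjoint q.k := by
  have hji : q.j * q.i = -q.k := by simp
  intro A C
  calc
    B (q.k A) C = B (q.i (q.j A)) C := by rw [← q.i_mul_j, Module.End.mul_apply]
    _ = B A ((q.j * q.i) C) := by
      rw [skewAdjoint_apply_left hi, skewAdjoint_apply_left hj, neg_neg, Module.End.mul_apply]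
    _ = B A ((-q.k) C) := by rw [hji]

lemma commute_quaternionicWedge_i (hi : B.IsSkewAdjoint q.i) (X Y : V) :
    Commute (quaternionicWedge B q X Y) q.i := by
  have hii (Z : V) : q.i (q.i Z) = -Z := by simp [← Module.End.mul_apply]
  have hij (Z : V) : q.i (q.j Z) = q.k Z := by simp [← Module.End.mul_apply]
  have hik (Z : V) : q.i (q.k Z) = -q.j Z := by simp [← Module.End.mul_apply]
  simp only [commute_iff_eq, quaternionicWedge, mul_add, add_mul, skewAdjoint_mul_wedge hi,
    hii, hij, hik, wedge_neg_left, wedge_neg_right]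
  abel

lemma commute_quaternionicWedge_j (hj : B.IsSkewAdjoint q.j) (X Y : V) :
    Commute (quaternionicWedge B q X Y) q.j := by
  have hji (Z : V) : q.j (q.i Z) = -q.k Z := by simp [← Module.End.mul_apply]
  have hjj (Z : V) : q.j (q.j Z) = -Z := by simp [← Module.End.mul_apply]
  have hjk (Z : V) : q.j (q.k Z) = q.i Z := by simp [← Module.End.mul_apply]
  simp only [commute_iff_eq, quaternionicWedge, mul_add, add_mul, skewAdjoint_mul_wedge hj,
    hji, hjj, hjk, wedge_neg_left, wedge_neg_right]
  abel

lemma commute_k {P : Module.End R V} (hi : Commute P q.i) (hj : Commute P q.j) :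
    Commute P q.k :=
  q.i_mul_j ▸ hi.mul_right hj

lemma commute_imPairing {P : Module.End R V} (hi : Commute P q.i) (hj : Commute P q.j)
    (X Y : V) : Commute P (imPairing B q X Y) :=
  ((hi.smul_right _).add_right (hj.smul_right _)).add_right ((commute_k hi hj).smul_right _)

lemma imPairing_sq (X Y : V) : imPairing B q X Y ^ 2 = -imPairingNormSq B q X Y • 1 := by
  simp only [imPairing, imPairingNormSq, sq, mul_add, add_mul, smul_mul_smul_comm, q.i_mul_i,
    q.i_mul_j, q.i_mul_k, q.j_mul_i, q.j_mul_j, q.j_mul_k, q.k_mul_i, q.k_mul_j, q.k_mul_k]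
  module

lemma quaternionicWedge_sub_imPairing_left [Invertible (2 : R)] (hB : B.IsSymm)
    (hi : B.IsSkewAdjoint q.i) (hj : B.IsSkewAdjoint q.j) (X Y : V) :
    (quaternionicWedge B q X Y - imPairing B q X Y) X = wedge B X Y X := by
  have wedge_apply_left {J : Module.End R V} (hJ : B.IsSkewAdjoint J) :
      wedge B (J X) (J Y) X = B X (J Y) • J X := by
    rw [wedge_apply, hB.eq (J X) X, skewAdjoint_apply_self hB hJ, hB.eq (J Y) X, zero_smul,
      sub_zero]
  simp only [quaternionicWedge, imPairing, LinearMap.sub_apply, LinearMap.add_apply,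
    LinearMap.smul_apply, wedge_apply_left hi, wedge_apply_left hj,
    wedge_apply_left (isSkewAdjoint_k hi hj), add_sub_cancel_right]

lemma quaternionicWedge_sub_imPairing_right [Invertible (2 : R)] (hB : B.IsSymm)
    (hi : B.IsSkewAdjoint q.i) (hj : B.IsSkewAdjoint q.j) (X Y : V) :
    (quaternionicWedge B q X Y - imPairing B q X Y) Y = wedge B X Y Y := by
  have wedge_apply_right {J : Module.End R V} (hJ : B.IsSkewAdjoint J) :
      wedge B (J X) (J Y) Y = B X (J Y) • J Y := by
    rw [wedge_apply, hB.eq (J Y) Y, skewAdjoint_apply_self hB hJ, skewAdjoint_apply_left hJ,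
      zero_smul, zero_sub, neg_smul, neg_neg]
  simp only [quaternionicWedge, imPairing, LinearMap.sub_apply, LinearMap.add_apply,
    LinearMap.smul_apply, wedge_apply_right hi, wedge_apply_right hj,
    wedge_apply_right (isSkewAdjoint_k hi hj), add_sub_cancel_right]

lemma mul_quaternionicWedge_eq_zero {P : Module.End R V} (hi : Commute P q.i)
    (hj : Commute P q.j) {X Y : V} (hX : P X = 0) (hY : P Y = 0) :
    P * quaternionicWedge B q X Y = 0 := by
  have mul_wedge_eq_zero {J : Module.End R V} (hJ : Commute P J) :
      P * wedge B (J X) (J Y) = 0 := by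
    have hPJ (Z : V) : P (J Z) = J (P Z) := LinearMap.congr_fun hJ.eq Z
    ext Z
    simp [wedge_apply, hPJ, hX, hY]
  have hone : P * wedge B X Y = 0 := mul_wedge_eq_zero (Commute.one_right P)
  simp only [quaternionicWedge, mul_add, hone, mul_wedge_eq_zero hi, mul_wedge_eq_zero hj,
    mul_wedge_eq_zero (commute_k hi hj), add_zero]

lemma quartic_quaternionicWedge_mul_eq_zero [Invertible (2 : R)] (hB : B.IsSymm)
    (hi : B.IsSkewAdjoint q.i) (hj : B.IsSkewAdjoint q.j) (X Y : V) :
    (quaternionicWedge B q X Y ^ 4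
        + (2 * (gramDet B X Y + imPairingNormSq B q X Y)) • quaternionicWedge B q X Y ^ 2
        + (gramDet B X Y - imPairingNormSq B q X Y) ^ 2 • 1) * quaternionicWedge B q X Y = 0 := by
  have hTi := commute_quaternionicWedge_i hi X Y
  have hTj := commute_quaternionicWedge_j hj X Y
  have hfactor := quartic_eq_mul_of_commute (commute_imPairing (B := B) hTi hTj X Y)
    (imPairing_sq X Y) (gramDet B X Y)
  obtain ⟨hX, hY⟩ := sq_apply_eq_of_apply_eq_wedge hB
    (quaternionicWedge_sub_imPairing_left hB hi hj X Y)
    (quaternionicWedge_sub_imPairing_right hB hi hj X Y)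
  refine mul_quaternionicWedge_eq_zero (commute_quartic hTi _ _) (commute_quartic hTj _ _) ?_ ?_
  · simp [hfactor, hX]
  · simp [hfactor, hY]

theorem stmt_15_general [Invertible (2 : R)] (hB : B.IsSymm)
    (hi : B.IsSkewAdjoint q.i) (hj : B.IsSkewAdjoint q.j) (X Y : V) :
    quaternionicWedge B q X Y ^ 5 =
      (-(2 * (gramDet B X Y + imPairingNormSq B q X Y))) • quaternionicWedge B q X Y ^ 3
        - ((gramDet B X Y - imPairingNormSq B q X Y) ^ 2) • quaternionicWedge B q X Y := by
  have hquartic := quartic_quaternionicWedge_mul_eq_zero hB hi hj X Y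
  simp only [add_mul, smul_mul_assoc, one_mul, ← pow_succ] at hquartic
  linear_combination (norm := module) hquartic

end Quaternionic

/-- The quaternion basis of `End V` given by a triple of operators satisfying the quaternion
relations. -/
def quaternionBasisOfTriple {R V : Type*} [CommRing R] [AddCommGroup V] [Module R V]
    {J₁ J₂ J₃ : Module.End R V} (h1 : ∀ Z, J₁ (J₁ Z) = -Z) (h2 : ∀ Z, J₂ (J₂ Z) = -Z)
    (h12 : J₁ ∘ₗ J₂ = J₃) (h23 : J₂ ∘ₗ J₃ = J₁) :
    QuaternionAlgebra.Basis (Module.End R V) (-1 : R) 0 (-1) where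
  i := J₁
  j := J₂
  k := J₃
  i_mul_i := by ext Z; simp [h1]
  j_mul_j := by ext Z; simp [h2]
  i_mul_j := h12
  j_mul_i := by ext Z; simp [← h23, h2]

section InnerProduct

variable {V : Type*} [SeminormedAddCommGroup V] [InnerProductSpace ℝ V]

lemma isSymm_innerₗ : LinearMap.BilinForm.IsSymm (innerₗ V) :=
  ⟨fun A C ↦ real_inner_comm C A⟩

lemma isSkewAdjoint_innerₗ {J : Module.End ℝ V} (hJ : ∀ A C : V, ⟪J A, C⟫ = -⟪A, J C⟫) :
    (innerₗ V).IsSkewAdjoint J :=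
  fun A C ↦ (hJ A C).trans (inner_neg_right A (J C)).symm

end InnerProduct

/-- `T = S + Ŝ` satisfies `T⁵ = −2(b²+m²) T³ − (b²−m²)² T`. -/
theorem stmt_15 {V : Type*} [NormedAddCommGroup V] [InnerProductSpace ℝ V]
    (X Y : V) (J₁ J₂ J₃ S S₁ S₂ S₃ : V →ₗ[ℝ] V)
    (h1 : ∀ Z, J₁ (J₁ Z) = -Z) (h2 : ∀ Z, J₂ (J₂ Z) = -Z) (h3 : ∀ Z, J₃ (J₃ Z) = -Z)
    (h12 : J₁ ∘ₗ J₂ = J₃) (h23 : J₂ ∘ₗ J₃ = J₁) (h31 : J₃ ∘ₗ J₁ = J₂)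
    (hs1 : ∀ A B : V, ⟪J₁ A, B⟫ = -⟪A, J₁ B⟫)
    (hs2 : ∀ A B : V, ⟪J₂ A, B⟫ = -⟪A, J₂ B⟫)
    (hs3 : ∀ A B : V, ⟪J₃ A, B⟫ = -⟪A, J₃ B⟫)
    (hi1 : ∀ Z, ‖J₁ Z‖ = ‖Z‖) (hi2 : ∀ Z, ‖J₂ Z‖ = ‖Z‖) (hi3 : ∀ Z, ‖J₃ Z‖ = ‖Z‖)
    (hS : ∀ Z, S Z = ⟪Y, Z⟫ • X - ⟪X, Z⟫ • Y)
    (hS1 : ∀ Z, S₁ Z = ⟪J₁ Y, Z⟫ • J₁ X - ⟪J₁ X, Z⟫ • J₁ Y)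
    (hS2 : ∀ Z, S₂ Z = ⟪J₂ Y, Z⟫ • J₂ X - ⟪J₂ X, Z⟫ • J₂ Y)
    (hS3 : ∀ Z, S₃ Z = ⟪J₃ Y, Z⟫ • J₃ X - ⟪J₃ X, Z⟫ • J₃ Y) :
    (S + (S₁ + S₂ + S₃)) ^ 5 =
      (-(2 * ((‖X‖ ^ 2 * ‖Y‖ ^ 2 - ⟪X, Y⟫ ^ 2)
          + (⟪X, J₁ Y⟫ ^ 2 + ⟪X, J₂ Y⟫ ^ 2 + ⟪X, J₃ Y⟫ ^ 2)))) • (S + (S₁ + S₂ + S₃)) ^ 3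
        - (((‖X‖ ^ 2 * ‖Y‖ ^ 2 - ⟪X, Y⟫ ^ 2)
          - (⟪X, J₁ Y⟫ ^ 2 + ⟪X, J₂ Y⟫ ^ 2 + ⟪X, J₃ Y⟫ ^ 2)) ^ 2) • (S + (S₁ + S₂ + S₃)) := by
  rw [add_eq_quaternionicWedge (B := innerₗ V) (q := quaternionBasisOfTriple h1 h2 h12 h23)
    hS hS1 hS2 hS3, ← real_inner_self_eq_norm_sq, ← real_inner_self_eq_norm_sq]
  exact stmt_15_general isSymm_innerₗ (isSkewAdjoint_innerₗ hs1) (isSkewAdjoint_innerₗ hs2) X Y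
end

section
/- For the curvature operator R of a quaternionic space form, there exist real coefficients (polynomials in 1/c, b, m₁, m₂, m₃) such that R⁵ = α·𝒥∘R⁴ + β·R³ + γ·𝒥∘R² + δ·R + ε·𝒥; moreover every power R^p with p ≥ 5 lies in the span of {R⁴, 𝒥∘R³, R², 𝒥∘R, E, 𝒥∘R⁴, R³, 𝒥∘R², R, 𝒥}. -/
open scoped RealInnerProductSpace

/-!
Let `h` be the quaternion-valued Hermitian form with real part `⟪·, ·⟫`, and let
`A Z = h(Y, Z) X - h(X, Z) Y`. Then `R = (c / 4) (A + 2𝒥)`, where `𝒥` is multiplication by the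
imaginary part of `h(Y, X)`, so `𝒥² = -(m₁² + m₂² + m₃²)`. The operator `A` commutes with every
quaternion and has its range in the quaternionic span of `X` and `Y`. A direct computation gives
`A² - 2𝒥A + d = 0` on `X` and on `Y`, where `d = b² - m₁² - m₂² - m₃²`. This does not pass to
their quaternionic span, because `𝒥` does not commute with the quaternions; but
`(A² + 2𝒥A + d)(A² - 2𝒥A + d)` is a real polynomial in `A`, hence it vanishes on that span, and
`(A² + 2𝒥A + d)(A² - 2𝒥A + d) A = 0`. Rewritten in terms of `R`, this is the quintic relation.
-/

section Algebra

theorem pow_mem_of_pow_eq_sum {A : Type*} [Semiring A] (S : AddSubmonoid A) {x : A} {d : ℕ}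
    (a : Fin d → A) (hx : x ^ d = ∑ i, a i * x ^ i.val)
    (ha : ∀ i, ∀ s ∈ S, a i * s ∈ S) (hS : ∀ i < d, x ^ i ∈ S) (p : ℕ) : x ^ p ∈ S := by
  induction p using Nat.strong_induction_on with
  | _ p ih =>
    rcases lt_or_ge p d with hp | hp
    · exact hS p hp
    · obtain ⟨r, rfl⟩ := Nat.exists_eq_add_of_le hp
      rw [pow_add, hx, Finset.sum_mul]
      refine S.sum_mem fun i _ ↦ ?_
      rw [mul_assoc, ← pow_add]
      exact ha i _ (ih _ (by lia))

variable {𝕜 E : Type*} [CommRing 𝕜] [Ring E] [Algebra 𝕜 E]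

theorem mul_mem_span_union_image_mul {j : E} {r : 𝕜} (hj : j * j = r • (1 : E)) (G : Set E)
    {x : E} (hx : x ∈ Submodule.span 𝕜 (G ∪ (j * ·) '' G)) :
    j * x ∈ Submodule.span 𝕜 (G ∪ (j * ·) '' G) := by
  suffices h : Submodule.span 𝕜 (G ∪ (j * ·) '' G) ≤
      (Submodule.span 𝕜 (G ∪ (j * ·) '' G)).comap (LinearMap.mulLeft 𝕜 j) from h hx
  rw [Submodule.span_le]
  rintro _ (hg | ⟨g, hg, rfl⟩)
  · exact Submodule.subset_span (Or.inr ⟨_, hg, rfl⟩)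
  · have hjj : j * (j * g) = r • g := by rw [← mul_assoc, hj, smul_one_mul]
    rw [SetLike.mem_coe, Submodule.mem_comap, LinearMap.mulLeft_apply, hjj]
    exact Submodule.smul_mem _ r (Submodule.subset_span (Or.inl hg))

theorem pow_mem_span_of_pow_five_eq {x j : E} {r α β γ δ ε : 𝕜} (hj : j * j = r • (1 : E))
    (hx : x ^ 5 = α • (j * x ^ 4) + β • x ^ 3 + γ • (j * x ^ 2) + δ • x + ε • j) (p : ℕ) :
    x ^ p ∈ Submodule.span 𝕜 ((x ^ ·) '' Set.Iio 5 ∪ (j * ·) '' ((x ^ ·) '' Set.Iio 5)) := by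
  set S := Submodule.span 𝕜 ((x ^ ·) '' Set.Iio 5 ∪ (j * ·) '' ((x ^ ·) '' Set.Iio 5))
  have hjS (k : 𝕜) (s : E) (hs : s ∈ S) : k • j * s ∈ S := by
    rw [smul_mul_assoc]
    exact S.smul_mem k (mul_mem_span_union_image_mul hj _ hs)
  have hkS (k : 𝕜) (s : E) (hs : s ∈ S) : k • (1 : E) * s ∈ S := by
    rw [smul_one_mul]
    exact S.smul_mem k hs
  refine pow_mem_of_pow_eq_sum S.toAddSubmonoid
    ![ε • j, δ • (1 : E), γ • j, β • (1 : E), α • j] ?_ ?_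
    (fun i hi ↦ Submodule.subset_span (Or.inl ⟨i, hi, rfl⟩)) p
  · have hsum : ε • j * x ^ 0 + δ • (1 : E) * x ^ 1 + γ • j * x ^ 2 + β • (1 : E) * x ^ 3
        + α • j * x ^ 4 = x ^ 5 := by
      simp only [hx, pow_zero, pow_one, mul_one, smul_mul_assoc, one_mul]
      abel
    rw [Fin.sum_univ_five, ← hsum]
    rfl
  · intro i
    fin_cases i
    exacts [hjS ε, hkS δ, hjS γ, hkS β, hjS α]

variable {x j : E} {n : 𝕜}

theorem quadratic_mul_conj_quadratic (hx : Commute x j) (hj : j * j = -n • (1 : E)) (a d : 𝕜) :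
    (x ^ 2 + a • (j * x) + d • 1) * (x ^ 2 - a • (j * x) + d • 1) =
      x ^ 4 + (a ^ 2 * n + 2 * d) • x ^ 2 + d ^ 2 • 1 := by
  have hx' (z : E) : x * (j * z) = j * (x * z) := by rw [← mul_assoc, hx.eq, mul_assoc]
  have hj' (z : E) : j * (j * z) = -n • z := by rw [← mul_assoc, hj, smul_one_mul]
  simp only [pow_succ', pow_zero, mul_one, mul_add, add_mul, mul_sub, mul_assoc, smul_mul_assoc,
    mul_smul_comm, one_mul, hx', hj']
  module

theorem quadratic_mul_quadratic_mul_linear (hx : Commute x j) (hj : j * j = -n • (1 : E))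
    (a b c u v : 𝕜) :
    (x ^ 2 - b • (j * x) + u • 1) * (x ^ 2 - c • (j * x) + v • 1) * (x - a • j) =
      x ^ 5 - ((a + b + c) • (j * x ^ 4) + (n * (a * b + b * c + c * a) - u - v) • x ^ 3
        + (a * (u + v) + b * v + c * u - n * (a * b * c)) • (j * x ^ 2)
        + (n * a * (b * v + c * u) - u * v) • x + (a * u * v) • j) := by
  have hx' (z : E) : x * (j * z) = j * (x * z) := by rw [← mul_assoc, hx.eq, mul_assoc]
  have hj' (z : E) : j * (j * z) = -n • z := by rw [← mul_assoc, hj, smul_one_mul]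
  simp only [pow_succ', pow_zero, mul_one, mul_add, sub_mul, add_mul, mul_sub, mul_assoc,
    smul_mul_assoc, mul_smul_comm, one_mul, hx.eq, hx', hj']
  module

end Algebra

/-- A quaternionic structure on a real inner product space by skew-adjoint operators
`J₁ = i`, `J₂ = j`, `J₃ = k`; the quaternion relations are those of a quaternion basis of the
endomorphism algebra. -/
structure QuaternionicStructure (V : Type*) [SeminormedAddCommGroup V] [InnerProductSpace ℝ V]
    extends QuaternionAlgebra.Basis (Module.End ℝ V) (-1 : ℝ) 0 (-1) where
  inner_i_left (A B : V) : ⟪i A, B⟫ = -⟪A, i B⟫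
  inner_j_left (A B : V) : ⟪j A, B⟫ = -⟪A, j B⟫

namespace QuaternionicStructure

open scoped Quaternion

variable {V : Type*} [SeminormedAddCommGroup V] [InnerProductSpace ℝ V]
  (J : QuaternionicStructure V)

theorem inner_k_left (A B : V) : ⟪J.k A, B⟫ = -⟪A, J.k B⟫ := by
  have hji : J.j * J.i = -J.k := by simp
  rw [← J.i_mul_j, Module.End.mul_apply, inner_i_left, inner_j_left, ← Module.End.mul_apply, hji,
    neg_neg, LinearMap.neg_apply, inner_neg_right, J.i_mul_j]

/-- The action of the quaternions on `V` given by a quaternionic structure. -/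
noncomputable def rep : ℍ[ℝ] →ₐ[ℝ] Module.End ℝ V := J.liftHom

theorem rep_eq (q : ℍ[ℝ]) :
    J.rep q = q.re • 1 + q.imI • J.i + q.imJ • J.j + q.imK • J.k := by
  rw [← Algebra.algebraMap_eq_smul_one]
  rfl

theorem inner_rep_left (q : ℍ[ℝ]) (A B : V) : ⟪J.rep q A, B⟫ = ⟪A, J.rep (star q) B⟫ := by
  simp [rep_eq, inner_add_left, inner_add_right, inner_smul_left, inner_smul_right, inner_i_left,
    inner_j_left, inner_k_left]

/-- The quaternion-valued Hermitian form `h(Y, Z)` with real part `⟪Y, Z⟫`, quaternionic linear in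
`Z` and conjugate linear in `Y`. -/
@[simps]
noncomputable def form (Y : V) : V →ₗ[ℝ] ℍ[ℝ] where
  toFun Z := ⟨⟪Y, Z⟫, ⟪J.i Y, Z⟫, ⟪J.j Y, Z⟫, ⟪J.k Y, Z⟫⟩
  map_add' _ _ := by apply Quaternion.ext <;> exact inner_add_right _ _ _
  map_smul' _ _ := by apply Quaternion.ext <;> exact inner_smul_right _ _ _

theorem inner_form (q : ℍ[ℝ]) (Y Z : V) : ⟪q, J.form Y Z⟫ = ⟪J.rep q Y, Z⟫ := by
  simp [Quaternion.inner_def, rep_eq, inner_add_left, inner_smul_left]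

theorem form_rep_right (q : ℍ[ℝ]) (Y Z : V) : J.form Y (J.rep q Z) = q * J.form Y Z := by
  refine ext_inner_left ℝ fun p ↦ ?_
  calc ⟪p, J.form Y (J.rep q Z)⟫ = ⟪J.rep (star q * p) Y, Z⟫ := by
        rw [inner_form, map_mul, Module.End.mul_apply, inner_rep_left _ (star q), star_star]
    _ = ⟪p, q * J.form Y Z⟫ := by
        rw [← inner_form]
        simp only [Quaternion.inner_def, Quaternion.re_mul, Quaternion.re_star,
          Quaternion.imI_star, Quaternion.imJ_star, Quaternion.imK_star, Quaternion.imI_mul,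
          Quaternion.imJ_mul, Quaternion.imK_mul]
        ring

theorem star_form (Y Z : V) : star (J.form Y Z) = J.form Z Y := by
  refine ext_inner_left ℝ fun p ↦ ?_
  calc ⟪p, star (J.form Y Z)⟫ = ⟪star p, J.form Y Z⟫ := by simp [Quaternion.inner_def]
    _ = ⟪p, J.form Z Y⟫ := by
        rw [inner_form, inner_form, inner_rep_left, star_star, real_inner_comm]

/-- The operator `𝒥 = m₁ J₁ + m₂ J₂ + m₃ J₃`, where `mᵢ = ⟪X, Jᵢ Y⟫`; it is the action of the
imaginary quaternion `m₁ i + m₂ j + m₃ k = Im h(Y, X)`. -/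
noncomputable def imOp (X Y : V) : Module.End ℝ V := J.rep (J.form Y X).im

/-- The number `m₁² + m₂² + m₃²`, where `mᵢ = ⟪X, Jᵢ Y⟫`. -/
noncomputable def imNormSq (X Y : V) : ℝ := Quaternion.normSq (J.form Y X).im

theorem imOp_eq (X Y : V) :
    J.imOp X Y = ⟪X, J.i Y⟫ • J.i + ⟪X, J.j Y⟫ • J.j + ⟪X, J.k Y⟫ • J.k := by
  simp [imOp, rep_eq, real_inner_comm]

theorem imOp_swap (X Y : V) : J.imOp Y X = -J.imOp X Y := by
  rw [imOp, imOp, ← star_form, Quaternion.im_star, map_neg]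

theorem imNormSq_swap (X Y : V) : J.imNormSq Y X = J.imNormSq X Y := by
  rw [imNormSq, imNormSq, ← star_form, Quaternion.im_star, Quaternion.normSq_neg]

theorem imOp_self (X : V) : J.imOp X X = 0 := by
  rw [imOp, Quaternion.star_eq_self.mp (J.star_form X X), Quaternion.im_coe, map_zero]

theorem imOp_mul_self (X Y : V) : J.imOp X Y * J.imOp X Y = -J.imNormSq X Y • 1 := by
  have hsq : (J.form Y X).im * (J.form Y X).im = algebraMap ℝ ℍ[ℝ] (-J.imNormSq X Y) := by
    rw [← sq, Quaternion.im_sq, map_neg, Quaternion.algebraMap_def, imNormSq]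
  rw [imOp, ← map_mul, hsq, AlgHom.commutes, Algebra.algebraMap_eq_smul_one]

theorem rep_form (X Y : V) : J.rep (J.form Y X) = ⟪X, Y⟫ • 1 + J.imOp X Y := by
  rw [imOp_eq, rep_eq]
  simp [real_inner_comm, add_assoc]

/-- The operator `Z ↦ h(Y, Z) X - h(X, Z) Y`, the quaternionic analogue of
`X ∧ Y : Z ↦ ⟪Y, Z⟫ X - ⟪X, Z⟫ Y`. -/
noncomputable def wedge (X Y : V) : Module.End ℝ V :=
  J.rep.toLinearMap.flip X ∘ₗ J.form Y - J.rep.toLinearMap.flip Y ∘ₗ J.form X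

theorem wedge_apply (X Y Z : V) :
    J.wedge X Y Z = J.rep (J.form Y Z) X - J.rep (J.form X Z) Y := rfl

theorem wedge_swap (X Y : V) : J.wedge Y X = -J.wedge X Y := (neg_sub _ _).symm

theorem commute_wedge_rep (X Y : V) (q : ℍ[ℝ]) : Commute (J.wedge X Y) (J.rep q) := by
  ext Z
  simp only [Module.End.mul_apply, wedge_apply, form_rep_right, map_mul, map_sub]

theorem commute_wedge_imOp (X Y : V) : Commute (J.wedge X Y) (J.imOp X Y) :=
  J.commute_wedge_rep X Y _

theorem wedge_apply_left (X Y : V) :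
    J.wedge X Y X = ⟪X, Y⟫ • X + J.imOp X Y X - ⟪X, X⟫ • Y := by
  simp [wedge_apply, rep_form, imOp_self]

theorem wedge_apply_right (X Y : V) :
    J.wedge X Y Y = ⟪Y, Y⟫ • X - ⟪X, Y⟫ • Y + J.imOp X Y Y := by
  have h := J.wedge_apply_left Y X
  rw [wedge_swap, imOp_swap, real_inner_comm, LinearMap.neg_apply, LinearMap.neg_apply] at h
  rw [← neg_inj, h]
  abel

/-- The number `d = b² - (m₁² + m₂² + m₃²)`, where `b` is the area of the parallelogram spanned by
`X` and `Y`. -/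
noncomputable def areaDefect (X Y : V) : ℝ := ⟪X, X⟫ * ⟪Y, Y⟫ - ⟪X, Y⟫ ^ 2 - J.imNormSq X Y

theorem areaDefect_swap (X Y : V) : J.areaDefect Y X = J.areaDefect X Y := by
  rw [areaDefect, areaDefect, imNormSq_swap, real_inner_comm Y X, mul_comm]

/-- The quadratic operator `A² - 2𝒥A + d`, where `A = J.wedge X Y`. -/
noncomputable def wedgeQuadratic (X Y : V) : Module.End ℝ V :=
  J.wedge X Y ^ 2 - (2 : ℝ) • (J.imOp X Y * J.wedge X Y) + J.areaDefect X Y • 1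

theorem wedgeQuadratic_apply_left (X Y : V) : J.wedgeQuadratic X Y X = 0 := by
  have hcomm : J.wedge X Y (J.imOp X Y X) = J.imOp X Y (J.wedge X Y X) :=
    LinearMap.congr_fun (J.commute_wedge_imOp X Y).eq X
  have hsq : J.imOp X Y (J.imOp X Y X) = -J.imNormSq X Y • X :=
    LinearMap.congr_fun (J.imOp_mul_self X Y) X
  simp only [wedgeQuadratic, areaDefect, sq (J.wedge X Y), LinearMap.add_apply,
    LinearMap.sub_apply, LinearMap.smul_apply, Module.End.mul_apply, Module.End.one_apply]
  simp only [wedge_apply_left, map_add, map_sub, map_smul, hcomm, wedge_apply_right, hsq]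
  module

theorem wedgeQuadratic_swap (X Y : V) : J.wedgeQuadratic Y X = J.wedgeQuadratic X Y := by
  rw [wedgeQuadratic, wedgeQuadratic, wedge_swap, imOp_swap, areaDefect_swap, neg_sq, neg_mul_neg]

theorem wedgeQuadratic_apply_right (X Y : V) : J.wedgeQuadratic X Y Y = 0 := by
  rw [← wedgeQuadratic_swap, wedgeQuadratic_apply_left]

theorem conj_wedgeQuadratic_mul_wedgeQuadratic_mul_wedge (X Y : V) :
    (J.wedge X Y ^ 2 + (2 : ℝ) • (J.imOp X Y * J.wedge X Y) + J.areaDefect X Y • 1) *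
      J.wedgeQuadratic X Y * J.wedge X Y = 0 := by
  set A := J.wedge X Y
  set P := (A ^ 2 + (2 : ℝ) • (J.imOp X Y * A) + J.areaDefect X Y • 1) * J.wedgeQuadratic X Y
    with hP
  have hPX : P X = 0 := by rw [hP, Module.End.mul_apply, wedgeQuadratic_apply_left, map_zero]
  have hPY : P Y = 0 := by rw [hP, Module.End.mul_apply, wedgeQuadratic_apply_right, map_zero]
  have hcomm (q : ℍ[ℝ]) : Commute P (J.rep q) := by
    have hA : Commute A (J.rep q) := J.commute_wedge_rep X Y q
    rw [hP, wedgeQuadratic, quadratic_mul_conj_quadratic (J.commute_wedge_imOp X Y)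
      (J.imOp_mul_self X Y)]
    exact ((hA.pow_left 4).add_left ((hA.pow_left 2).smul_left _)).add_left
      ((Commute.one_left _).smul_left _)
  have hrep (q : ℍ[ℝ]) {W : V} (hW : P W = 0) : P (J.rep q W) = 0 := by
    rw [← Module.End.mul_apply, (hcomm q).eq, Module.End.mul_apply, hW, map_zero]
  ext Z
  rw [Module.End.mul_apply, J.wedge_apply, map_sub, hrep _ hPX, hrep _ hPY, sub_zero,
    LinearMap.zero_apply]

/-- The curvature operator `R(X, Y)` of a quaternionic space form of curvature `c`. -/
noncomputable def curvature (c : ℝ) (X Y : V) : Module.End ℝ V :=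
  (c / 4) • (J.wedge X Y + (2 : ℝ) • J.imOp X Y)

theorem curvature_apply (c : ℝ) (X Y Z : V) : J.curvature c X Y Z =
    (c / 4) • (⟪Y, Z⟫ • X - ⟪X, Z⟫ • Y
      + (⟪J.i Y, Z⟫ • J.i X - ⟪J.i X, Z⟫ • J.i Y)
      + (⟪J.j Y, Z⟫ • J.j X - ⟪J.j X, Z⟫ • J.j Y)
      + (⟪J.k Y, Z⟫ • J.k X - ⟪J.k X, Z⟫ • J.k Y)
      + (2 * ⟪X, J.i Y⟫) • J.i Z + (2 * ⟪X, J.j Y⟫) • J.j Z + (2 * ⟪X, J.k Y⟫) • J.k Z) := by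
  simp only [curvature, imOp_eq, wedge_apply, rep_eq, LinearMap.add_apply,
    LinearMap.smul_apply, Module.End.one_apply, re_form_apply, imI_form_apply, imJ_form_apply,
    imK_form_apply]
  module

theorem commute_curvature_imOp (c : ℝ) (X Y : V) : Commute (J.curvature c X Y) (J.imOp X Y) :=
  ((J.commute_wedge_imOp X Y).add_left ((Commute.refl _).smul_left _)).smul_left _

theorem imOp_mul_curvature (c : ℝ) (X Y : V) : J.imOp X Y * J.curvature c X Y =
    (c / 4) • (J.imOp X Y * J.wedge X Y - (2 * J.imNormSq X Y) • 1) := by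
  rw [curvature, mul_smul_comm, mul_add, mul_smul_comm, imOp_mul_self]
  module

theorem curvature_sq (c : ℝ) (X Y : V) : J.curvature c X Y ^ 2 = (c / 4) ^ 2 •
    (J.wedge X Y ^ 2 + (4 : ℝ) • (J.imOp X Y * J.wedge X Y) - (4 * J.imNormSq X Y) • 1) := by
  simp only [curvature, sq, smul_mul_assoc, mul_smul_comm, mul_add, add_mul,
    (J.commute_wedge_imOp X Y).eq, imOp_mul_self]
  module

theorem curvature_factorization (c : ℝ) (X Y : V) :
    (J.curvature c X Y ^ 2 - (c / 2) • (J.imOp X Y * J.curvature c X Y)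
        + ((c / 4) ^ 2 * J.areaDefect X Y) • 1) *
      (J.curvature c X Y ^ 2 - (3 * c / 2) • (J.imOp X Y * J.curvature c X Y)
        + ((c / 4) ^ 2 * (J.areaDefect X Y - 8 * J.imNormSq X Y)) • 1) *
      (J.curvature c X Y - (c / 2) • J.imOp X Y) = 0 := by
  have hconj : J.curvature c X Y ^ 2 - (c / 2) • (J.imOp X Y * J.curvature c X Y)
      + ((c / 4) ^ 2 * J.areaDefect X Y) • 1 = (c / 4) ^ 2 • (J.wedge X Y ^ 2
        + (2 : ℝ) • (J.imOp X Y * J.wedge X Y) + J.areaDefect X Y • 1) := by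
    rw [curvature_sq, imOp_mul_curvature]
    module
  have hquad : J.curvature c X Y ^ 2 - (3 * c / 2) • (J.imOp X Y * J.curvature c X Y)
      + ((c / 4) ^ 2 * (J.areaDefect X Y - 8 * J.imNormSq X Y)) • 1 =
        (c / 4) ^ 2 • J.wedgeQuadratic X Y := by
    rw [curvature_sq, imOp_mul_curvature, wedgeQuadratic]
    module
  have hlin : J.curvature c X Y - (c / 2) • J.imOp X Y = (c / 4) • J.wedge X Y := by
    rw [curvature]
    module
  rw [hconj, hquad, hlin]
  simp only [smul_mul_assoc, mul_smul_comm, conj_wedgeQuadratic_mul_wedgeQuadratic_mul_wedge,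
    smul_zero]

theorem curvature_pow_five (c : ℝ) (X Y : V) :
    J.curvature c X Y ^ 5 =
      (5 * c / 2) • (J.imOp X Y * J.curvature c X Y ^ 4)
      + (c ^ 2 / 8 * (18 * J.imNormSq X Y - J.areaDefect X Y)) • J.curvature c X Y ^ 3
      + (c ^ 3 / 16 * (3 * J.areaDefect X Y - 14 * J.imNormSq X Y)) •
          (J.imOp X Y * J.curvature c X Y ^ 2)
      + (c ^ 4 / 256 * (24 * J.imNormSq X Y * J.areaDefect X Y - 32 * J.imNormSq X Y ^ 2
          - J.areaDefect X Y ^ 2)) • J.curvature c X Y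
      + (c ^ 5 / 512 * (J.areaDefect X Y * (J.areaDefect X Y - 8 * J.imNormSq X Y))) •
          J.imOp X Y := by
  have h := J.curvature_factorization c X Y
  rw [quadratic_mul_quadratic_mul_linear (J.commute_curvature_imOp c X Y) (J.imOp_mul_self X Y),
    sub_eq_zero] at h
  rw [h]
  module

theorem curvature_pow_mem_span (c : ℝ) (X Y : V) (p : ℕ) :
    J.curvature c X Y ^ p ∈ Submodule.span ℝ ((J.curvature c X Y ^ ·) '' Set.Iio 5 ∪
      (J.imOp X Y * ·) '' ((J.curvature c X Y ^ ·) '' Set.Iio 5)) :=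
  pow_mem_span_of_pow_five_eq (J.imOp_mul_self X Y) (J.curvature_pow_five c X Y) p

end QuaternionicStructure

/-- for the curvature operator `R` of a quaternionic space form (`c ≠ 0`),
`R⁵ = α 𝒥∘R⁴ + β R³ + γ 𝒥∘R² + δ R + ε 𝒥` for some reals, and every power `R^p`, `p ≥ 5`,
lies in the span of `{R⁴, 𝒥∘R³, R², 𝒥∘R, E, 𝒥∘R⁴, R³, 𝒥∘R², R, 𝒥}`. -/
theorem stmt_16 {V : Type*} [NormedAddCommGroup V] [InnerProductSpace ℝ V]
    (c : ℝ) (hc : c ≠ 0) (X Y : V) (J₁ J₂ J₃ R : V →ₗ[ℝ] V)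
    (h1 : ∀ Z, J₁ (J₁ Z) = -Z) (h2 : ∀ Z, J₂ (J₂ Z) = -Z) (h3 : ∀ Z, J₃ (J₃ Z) = -Z)
    (h12 : J₁ ∘ₗ J₂ = J₃) (h23 : J₂ ∘ₗ J₃ = J₁) (h31 : J₃ ∘ₗ J₁ = J₂)
    (hs1 : ∀ A B : V, ⟪J₁ A, B⟫ = -⟪A, J₁ B⟫)
    (hs2 : ∀ A B : V, ⟪J₂ A, B⟫ = -⟪A, J₂ B⟫)
    (hs3 : ∀ A B : V, ⟪J₃ A, B⟫ = -⟪A, J₃ B⟫)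
    (hi1 : ∀ Z, ‖J₁ Z‖ = ‖Z‖) (hi2 : ∀ Z, ‖J₂ Z‖ = ‖Z‖) (hi3 : ∀ Z, ‖J₃ Z‖ = ‖Z‖)
    (hR : ∀ Z, R Z = (c / 4) • (⟪Y, Z⟫ • X - ⟪X, Z⟫ • Y
      + (⟪J₁ Y, Z⟫ • J₁ X - ⟪J₁ X, Z⟫ • J₁ Y)
      + (⟪J₂ Y, Z⟫ • J₂ X - ⟪J₂ X, Z⟫ • J₂ Y)
      + (⟪J₃ Y, Z⟫ • J₃ X - ⟪J₃ X, Z⟫ • J₃ Y)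
      + (2 * ⟪X, J₁ Y⟫) • J₁ Z + (2 * ⟪X, J₂ Y⟫) • J₂ Z + (2 * ⟪X, J₃ Y⟫) • J₃ Z)) :
    (∃ α β γ δ ε : ℝ,
      R ^ 5 = α • ((⟪X, J₁ Y⟫ • J₁ + ⟪X, J₂ Y⟫ • J₂ + ⟪X, J₃ Y⟫ • J₃) ∘ₗ R ^ 4)
        + β • R ^ 3
        + γ • ((⟪X, J₁ Y⟫ • J₁ + ⟪X, J₂ Y⟫ • J₂ + ⟪X, J₃ Y⟫ • J₃) ∘ₗ R ^ 2)
        + δ • R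
        + ε • (⟪X, J₁ Y⟫ • J₁ + ⟪X, J₂ Y⟫ • J₂ + ⟪X, J₃ Y⟫ • J₃)) ∧
    ∀ p : ℕ, 5 ≤ p →
      R ^ p ∈ Submodule.span ℝ
        ({R ^ 4, (⟪X, J₁ Y⟫ • J₁ + ⟪X, J₂ Y⟫ • J₂ + ⟪X, J₃ Y⟫ • J₃) ∘ₗ R ^ 3,
          R ^ 2, (⟪X, J₁ Y⟫ • J₁ + ⟪X, J₂ Y⟫ • J₂ + ⟪X, J₃ Y⟫ • J₃) ∘ₗ R,
          LinearMap.id,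
          (⟪X, J₁ Y⟫ • J₁ + ⟪X, J₂ Y⟫ • J₂ + ⟪X, J₃ Y⟫ • J₃) ∘ₗ R ^ 4,
          R ^ 3, (⟪X, J₁ Y⟫ • J₁ + ⟪X, J₂ Y⟫ • J₂ + ⟪X, J₃ Y⟫ • J₃) ∘ₗ R ^ 2,
          R, ⟪X, J₁ Y⟫ • J₁ + ⟪X, J₂ Y⟫ • J₂ + ⟪X, J₃ Y⟫ • J₃} : Set (V →ₗ[ℝ] V)) := by
  have hsq {J : Module.End ℝ V} (hJ : ∀ Z, J (J Z) = -Z) : J * J = -1 := LinearMap.ext hJ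
  have hji : J₂ * J₁ = -J₃ := by
    calc J₂ * J₁ = J₂ * (J₂ * J₃) := congrArg (J₂ * ·) h23.symm
      _ = -J₃ := by rw [← mul_assoc, hsq h2, neg_one_mul]
  let J : QuaternionicStructure V :=
    { i := J₁, j := J₂, k := J₃
      i_mul_i := by simp [hsq h1]
      j_mul_j := by simp [hsq h2]
      i_mul_j := h12
      j_mul_i := by simp [hji]
      inner_i_left := hs1
      inner_j_left := hs2 }
  have hRJ : R = J.curvature c X Y :=
    LinearMap.ext fun Z ↦ (hR Z).trans (J.curvature_apply c X Y Z).symm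
  rw [← J.imOp_eq X Y, hRJ]
  refine ⟨⟨_, _, _, _, _, J.curvature_pow_five c X Y⟩, fun p _ ↦ ?_⟩
  refine Submodule.span_mono ?_ (J.curvature_pow_mem_span c X Y p)
  rintro _ (⟨i, hi, rfl⟩ | ⟨_, ⟨i, hi, rfl⟩, rfl⟩) <;>
    rw [Set.mem_Iio] at hi <;> interval_cases i <;>
    simp [Module.End.mul_eq_comp, Module.End.one_eq_id]
end
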